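/- Suppose the position tracking error q̃ : ℝ → (Fin n → ℝ) is differentiable and satisfies q̃′(t) = −q̃(t) − (1/2) M(t)⁻¹ M′(t) q̃(t) for all t, and suppose in addition that M is uniformly positive definite: there is m > 0 with xᵀ M(t) x ≥ m ‖x‖² for all t ∈ ℝ and all x ∈ Fin n → ℝ. Then ‖q̃(t)‖² ≤ (2/m) · V₁(0) · exp(−2t) for all t ≥ 0, where V₁(0) = (1/2) q̃(0)ᵀ M(0) q̃(0); in particular q̃(t) → 0 as t → ∞, i.e., the frictionless closed-loop motion is asymptotically (indeed exponentially) stable. -/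

import Mathlib

open Matrix

/-!
Symmetry of `M` gives `V₁' = q̃ᵀ (M q̃' + ½ M' q̃)` for the Lyapunov function `V₁ = ½ q̃ᵀ M q̃`, and
the term `-½ M⁻¹ M' q̃` of the error equation cancels `½ M' q̃`. What remains is exactly
`V₁' = -2 V₁` (or `-2 k V₁` when the linear feedback is `-k q̃`), so `V₁` decays exponentially, and
uniform positive definiteness bounds `‖q̃‖²` by a multiple of it.
-/

open Filter Topology

section Calculus

variable {𝕜 A m n : Type*} [NontriviallyNormedField 𝕜] [NormedRing A] [NormedAlgebra 𝕜 A]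
  [Fintype n] {t : 𝕜}

theorem hasDerivAt_dotProduct {u v : 𝕜 → n → A} {u' v' : n → A}
    (hu : HasDerivAt u u' t) (hv : HasDerivAt v v' t) :
    HasDerivAt (fun s => u s ⬝ᵥ v s) (u' ⬝ᵥ v t + u t ⬝ᵥ v') t := by
  simpa only [dotProduct, Finset.sum_add_distrib] using
    HasDerivAt.fun_sum (u := Finset.univ)
      fun i _ => (hasDerivAt_pi.1 hu i).fun_mul (hasDerivAt_pi.1 hv i)

theorem hasDerivAt_mulVec [Finite m] {M : 𝕜 → Matrix m n A} {M' : Matrix m n A}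
    {v : 𝕜 → n → A} {v' : n → A}
    (hM : ∀ i j, HasDerivAt (fun s => M s i j) (M' i j) t) (hv : HasDerivAt v v' t) :
    HasDerivAt (fun s => M s *ᵥ v s) (M' *ᵥ v t + M t *ᵥ v') t := by
  cases nonempty_fintype m
  exact hasDerivAt_pi.2 fun i => hasDerivAt_dotProduct (hasDerivAt_pi.2 (hM i)) hv

end Calculus

theorem eq_exp_smul_of_hasDerivAt {E : Type*} [NormedAddCommGroup E] [NormedSpace ℝ E]
    {f : ℝ → E} {c : ℝ} (hf : ∀ t, HasDerivAt f (c • f t) t) (t : ℝ) :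
    f t = Real.exp (c * t) • f 0 := by
  have hexp (s : ℝ) : HasDerivAt (fun s => Real.exp (-(c * s))) (Real.exp (-(c * s)) * -c) s := by
    simpa only [mul_one] using ((hasDerivAt_id' s).const_mul c).fun_neg.exp
  have hderiv (s : ℝ) : HasDerivAt (fun s => Real.exp (-(c * s)) • f s) 0 s :=
    ((hexp s).fun_smul (hf s)).congr_deriv (by module)
  have hconst : Real.exp (-(c * t)) • f t = f 0 := by
    simpa only [mul_zero, neg_zero, Real.exp_zero, one_smul] using
      is_const_of_deriv_eq_zero (fun s => (hderiv s).differentiableAt)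
        (fun s => (hderiv s).deriv) t 0
  rw [← hconst, smul_smul, ← Real.exp_add, add_neg_cancel, Real.exp_zero, one_smul]

theorem tendsto_zero_of_tendsto_dotProduct_self {α ι : Type*} [Fintype ι] {l : Filter α}
    {v : α → ι → ℝ} (h : Tendsto (fun a => v a ⬝ᵥ v a) l (𝓝 0)) : Tendsto v l (𝓝 0) := by
  have hsqrt : Tendsto (fun a => √(v a ⬝ᵥ v a)) l (𝓝 0) := by
    simpa only [Real.sqrt_zero] using h.sqrt
  refine tendsto_pi_nhds.2 fun i => squeeze_zero_norm (fun a => Real.abs_le_sqrt ?_) hsqrt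
  rw [sq]
  exact Finset.single_le_sum (f := fun j => v a j * v a j)
    (fun j _ => mul_self_nonneg _) (Finset.mem_univ i)

section Invertibility

variable {ι K : Type*} [Fintype ι] [DecidableEq ι]

theorem isUnit_det_of_mul_dotProduct_self_le [Field K] [LinearOrder K] [IsStrictOrderedRing K]
    {P : Matrix ι ι K} {m : K} (hm : 0 < m)
    (hcoercive : ∀ x, m * (x ⬝ᵥ x) ≤ x ⬝ᵥ (P *ᵥ x)) : IsUnit P.det := by
  refine isUnit_iff_ne_zero.2 fun hdet => ?_
  obtain ⟨x, hx, hPx⟩ := exists_mulVec_eq_zero_iff.2 hdet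
  have hle : m * (x ⬝ᵥ x) ≤ 0 := by simpa only [hPx, dotProduct_zero] using hcoercive x
  have hnonneg : 0 ≤ x ⬝ᵥ x := Finset.sum_nonneg fun i _ => mul_self_nonneg (x i)
  exact hx (dotProduct_self_eq_zero.1 ((nonpos_of_mul_nonpos_right hle hm).antisymm hnonneg))

theorem mulVec_sub_smul_inv_mulVec_add_smul [CommRing K] {P : Matrix ι ι K} (hP : IsUnit P.det)
    (c : K) (x y : ι → K) : P *ᵥ (x - c • (P⁻¹ *ᵥ y)) + c • y = P *ᵥ x := by
  rw [mulVec_sub, mulVec_smul, mulVec_mulVec, mul_nonsing_inv P hP, one_mulVec, sub_add_cancel]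

end Invertibility

section ClosedLoop

variable {ι : Type*} [Fintype ι] {M : ℝ → Matrix ι ι ℝ} {q : ℝ → ι → ℝ} {t : ℝ}

/-- The Lyapunov function `V₁(t) = ½ q(t)ᵀ M(t) q(t)` whose decay along the closed loop gives
stability; here `q` is the tracking error `q̃`. -/
noncomputable def lyapunov (M : ℝ → Matrix ι ι ℝ) (q : ℝ → ι → ℝ) (t : ℝ) : ℝ :=
  (1 / 2 : ℝ) * (q t ⬝ᵥ (M t *ᵥ q t))

theorem dotProduct_self_le_lyapunov {m : ℝ} (hm : 0 < m)
    (hcoercive : m * (q t ⬝ᵥ q t) ≤ q t ⬝ᵥ (M t *ᵥ q t)) :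
    q t ⬝ᵥ q t ≤ 2 / m * lyapunov M q t := by
  calc q t ⬝ᵥ q t ≤ (q t ⬝ᵥ (M t *ᵥ q t)) / m := (le_div_iff₀' hm).2 hcoercive
    _ = 2 / m * lyapunov M q t := by rw [lyapunov]; ring

theorem hasDerivAt_lyapunov {M' : Matrix ι ι ℝ} {q' : ι → ℝ}
    (hM : ∀ i j, HasDerivAt (fun s => M s i j) (M' i j) t) (hsymm : (M t).IsSymm)
    (hq : HasDerivAt q q' t) :
    HasDerivAt (lyapunov M q) (q t ⬝ᵥ (M t *ᵥ q' + (1 / 2 : ℝ) • (M' *ᵥ q t))) t := by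
  have hswap : q' ⬝ᵥ (M t *ᵥ q t) = q t ⬝ᵥ (M t *ᵥ q') := by
    rw [← dotProduct_transpose_mulVec, hsymm.eq]
  have hform := hasDerivAt_dotProduct hq (hasDerivAt_mulVec hM hq)
  refine (hform.const_mul (1 / 2 : ℝ)).congr_deriv ?_
  rw [hswap, dotProduct_add, dotProduct_add, dotProduct_smul, smul_eq_mul]
  ring

variable [DecidableEq ι] {M' : ℝ → Matrix ι ι ℝ} {q' : ℝ → ι → ℝ} {k : ℝ}

theorem lyapunov_eq_mul_exp
    (hM : ∀ t i j, HasDerivAt (fun s => M s i j) (M' t i j) t)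
    (hsymm : ∀ t, (M t).IsSymm) (hunit : ∀ t, IsUnit (M t).det)
    (hq : ∀ t, HasDerivAt q (q' t) t)
    (hclosed : ∀ t, q' t = -(k • q t) - (1 / 2 : ℝ) • ((M t)⁻¹ *ᵥ (M' t *ᵥ q t))) (t : ℝ) :
    lyapunov M q t = lyapunov M q 0 * Real.exp (-2 * k * t) := by
  have hderiv (s : ℝ) : HasDerivAt (lyapunov M q) ((-2 * k) • lyapunov M q s) s := by
    refine (hasDerivAt_lyapunov (hM s) (hsymm s) (hq s)).congr_deriv ?_
    rw [hclosed, mulVec_sub_smul_inv_mulVec_add_smul (hunit s), mulVec_neg, mulVec_smul,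
      dotProduct_neg, dotProduct_smul, lyapunov, smul_eq_mul, smul_eq_mul]
    ring
  rw [eq_exp_smul_of_hasDerivAt hderiv t, smul_eq_mul, mul_comm]

theorem statement2_general {m : ℝ} (hk : 0 < k) (hm : 0 < m)
    (hM : ∀ t i j, HasDerivAt (fun s => M s i j) (M' t i j) t)
    (hsymm : ∀ t, (M t).IsSymm) (hq : ∀ t, HasDerivAt q (q' t) t)
    (hclosed : ∀ t, q' t = -(k • q t) - (1 / 2 : ℝ) • ((M t)⁻¹ *ᵥ (M' t *ᵥ q t)))
    (hcoercive : ∀ t x, m * (x ⬝ᵥ x) ≤ x ⬝ᵥ (M t *ᵥ x)) :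
    (∀ t, q t ⬝ᵥ q t ≤ 2 / m * lyapunov M q 0 * Real.exp (-2 * k * t)) ∧
      Tendsto q atTop (𝓝 0) := by
  have hbound (t : ℝ) : q t ⬝ᵥ q t ≤ 2 / m * lyapunov M q 0 * Real.exp (-2 * k * t) := by
    have hunit (s : ℝ) : IsUnit (M s).det :=
      isUnit_det_of_mul_dotProduct_self_le hm (hcoercive s)
    rw [mul_assoc, ← lyapunov_eq_mul_exp hM hsymm hunit hq hclosed]
    exact dotProduct_self_le_lyapunov hm (hcoercive t (q t))
  have hexp : Tendsto (fun t => Real.exp (-2 * k * t)) atTop (𝓝 0) :=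
    Real.tendsto_exp_atBot.comp (tendsto_id.const_mul_atTop_of_neg (by linarith))
  refine ⟨hbound, tendsto_zero_of_tendsto_dotProduct_self ?_⟩
  exact squeeze_zero (fun t => dotProduct_self_star_nonneg (q t)) hbound
    (by simpa only [mul_zero] using hexp.const_mul (2 / m * lyapunov M q 0))

end ClosedLoop

/-- Under the closed-loop equation `q̃′ = −q̃ − (1/2) M⁻¹ M′ q̃` and
uniform positive definiteness of `M` (`xᵀ M(t) x ≥ m ‖x‖²` with `m > 0`), the
squared Euclidean norm of the tracking error satisfies
`‖q̃(t)‖² ≤ (2/m) · V₁(0) · exp(−2t)` for `t ≥ 0`, where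
`V₁(0) = (1/2) q̃(0)ᵀ M(0) q̃(0)`; in particular `q̃(t) → 0` as `t → ∞`.
(Here `‖x‖² = x ⬝ᵥ x` is the squared Euclidean norm.) -/
theorem statement2 (n : ℕ) (hn : 1 ≤ n)
    (M M' : ℝ → Matrix (Fin n) (Fin n) ℝ)
    (hMderiv : ∀ t : ℝ, ∀ i j : Fin n, HasDerivAt (fun s => M s i j) (M' t i j) t)
    (hMsymm : ∀ t : ℝ, (M t).IsSymm)
    (hMpd : ∀ t : ℝ, (M t).PosDef)
    (qtil qtil' : ℝ → Fin n → ℝ)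
    (hq : ∀ t : ℝ, HasDerivAt qtil (qtil' t) t)
    (hclosed : ∀ t : ℝ, qtil' t = -qtil t - (1/2 : ℝ) • ((M t)⁻¹ *ᵥ (M' t *ᵥ qtil t)))
    (m : ℝ) (hm : 0 < m)
    (hunif : ∀ t : ℝ, ∀ x : Fin n → ℝ, m * (x ⬝ᵥ x) ≤ x ⬝ᵥ (M t *ᵥ x)) :
    (∀ t : ℝ, 0 ≤ t →
      qtil t ⬝ᵥ qtil t
        ≤ (2 / m) * ((1/2 : ℝ) * (qtil 0 ⬝ᵥ (M 0 *ᵥ qtil 0))) * Real.exp (-2 * t)) ∧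
    Filter.Tendsto qtil Filter.atTop (nhds 0) := by
  have ⟨hbound, hlim⟩ := statement2_general one_pos hm hMderiv hMsymm hq
    (by simpa only [one_smul] using hclosed) hunif
  exact ⟨fun t _ => by simpa only [mul_one, lyapunov] using hbound t, hlim⟩
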